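/- Let $R$ be a local ring with maximal ideal $\mathfrak{m}$, $J$ an ideal of $R$, $A$ an $R$-algebra which is flat as an $R$-module, and $\Phi : A^p \to A^q$ an $A$-linear map with cokernel $F$. Define $\ker_J\Phi = \{\zeta \in A^p : \Phi(\zeta) \in J\cdot A^q\}$. Then $F \otimes_R R/J$ is flat over $R/J$ if and only if the image of $\ker_J\Phi$ in $(A/\mathfrak{m}A)^p$ equals the kernel of the induced map $\Phi_\mathfrak{m} : (A/\mathfrak{m}A)^p \to (A/\mathfrak{m}A)^q$, assuming flatness of $F\otimes_R R/J$ over $R/J$ is equivalent to vanishing of $\mathrm{Tor}_1^{R/J}(F\otimes_R R/J, R/\mathfrak{m})$ (e.g., when $R/J$ is Noetherian local and $F\otimes_R R/J$ is a finitely generated module over a Noetherian local $R/J$-algebra). -/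

import Mathlib

open Matrix IsLocalRing TensorProduct

section FlatnessCriterion

variable {R P : Type*} [CommRing R] [AddCommGroup P] [Module R P]

theorem Submodule.exists_sum_of_mem_ideal_smul {I : Ideal R} {N : Submodule R P} {x : P}
    (hx : x ∈ I • N) :
    ∃ (n : ℕ) (r : Fin n → R) (y : Fin n → P),
      (∀ i, r i ∈ I) ∧ (∀ i, y i ∈ N) ∧ ∑ i, r i • y i = x := by
  have hN : x ∈ I • Submodule.span R (Set.range ((↑) : N → P)) := by
    simpa using hx
  obtain ⟨a, ha, rfl⟩ := (Submodule.mem_ideal_smul_span_iff_exists_sum I _ x).1 hN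
  refine ⟨a.support.card, fun i ↦ a (a.support.equivFin.symm i),
    fun i ↦ ((a.support.equivFin.symm i : N) : P), fun i ↦ ha _, fun i ↦ Subtype.property _, ?_⟩
  rw [a.support.equivFin.symm.sum_comp fun i : a.support ↦ a i • ((i : N) : P),
    Finsupp.sum, Finset.sum_coe_sort a.support fun i : N ↦ a i • (i : P)]

theorem Submodule.exists_sum_of_mem_span_range_smul {ι : Type*} [Fintype ι] {r : ι → R}
    {N : Submodule R P} {x : P} (hx : x ∈ Ideal.span (Set.range r) • N) :
    ∃ y : ι → P, (∀ i, y i ∈ N) ∧ ∑ i, r i • y i = x := by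
  refine Submodule.smul_induction_on hx (fun s hs n hn ↦ ?_) fun x y hx hy ↦ ?_
  · obtain ⟨c, rfl⟩ := Ideal.mem_span_range_iff_exists_fun.1 hs
    exact ⟨fun i ↦ c i • n, fun i ↦ N.smul_mem _ hn, by
      simp only [Finset.sum_smul, smul_smul, mul_comm]⟩
  · obtain ⟨a, ha, rfl⟩ := hx
    obtain ⟨b, hb, rfl⟩ := hy
    exact ⟨a + b, fun i ↦ N.add_mem (ha i) (hb i), by
      simp [Finset.sum_add_distrib]⟩

/-- In a flat module `P`, the colon submodule `IP : x` is contained in `(I : x)P`. -/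
theorem Module.Flat.mem_smul_top_of_smul_mem_smul_top [Module.Flat R P] {I K : Ideal R} {x : R}
    (hK : ∀ a, x * a ∈ I → a ∈ K) {v : P} (hv : x • v ∈ I • (⊤ : Submodule R P)) :
    v ∈ K • (⊤ : Submodule R P) := by
  obtain ⟨n, r, y, hr, -, hy⟩ := Submodule.exists_sum_of_mem_ideal_smul hv
  obtain ⟨k, a, z, hz, ha⟩ := Module.Flat.isTrivialRelation_of_sum_smul_eq_zero
    (R := R) (M := P) (f := (fun o : Option (Fin n) ↦ o.elim x fun i ↦ -r i))
    (x := fun o ↦ o.elim v y) (by simp [Fintype.sum_option, hy])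
  have hv := hz none
  simp only [Option.elim_none] at hv
  rw [hv]
  refine Submodule.sum_mem _ fun j _ ↦ Submodule.smul_mem_smul (hK _ ?_) trivial
  have := ha j
  simp only [Fintype.sum_option, Option.elim_none, Option.elim_some, neg_mul,
    Finset.sum_neg_distrib, add_neg_eq_zero] at this
  rw [this]
  exact I.sum_mem fun i _ ↦ I.mul_mem_right _ (hr i)

variable {J : Ideal R} {M : Type*} [AddCommGroup M] [Module R M] [Module (R ⧸ J) M]
  [IsScalarTower R (R ⧸ J) M] {g : P →ₗ[R] M}

theorem Module.Flat.ker_inf_smul_top_le [Module.Flat (R ⧸ J) M] (hg : Function.Surjective g)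
    (I : Ideal R) :
    LinearMap.ker g ⊓ I • ⊤ ≤ I • LinearMap.ker g ⊔ J • (⊤ : Submodule R P) := by
  rintro v ⟨hv, hvI⟩
  obtain ⟨n, r, p, hr, -, rfl⟩ := Submodule.exists_sum_of_mem_ideal_smul hvI
  have hrel : ∑ i, Ideal.Quotient.mk J (r i) • g (p i) = 0 := by
    have : ∀ i, Ideal.Quotient.mk J (r i) • g (p i) = r i • g (p i) := fun i ↦
      algebraMap_smul (R ⧸ J) (r i) (g (p i))
    simpa [this] using hv
  obtain ⟨k, a, y, hy, ha⟩ := Module.Flat.isTrivialRelation_of_sum_smul_eq_zero hrel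
  choose b hb using fun i j ↦ Ideal.Quotient.mk_surjective (a i j)
  choose z hz using fun j ↦ hg (y j)
  have hdec : ∑ i, r i • p i =
      ∑ i, r i • (p i - ∑ j, b i j • z j) + ∑ j, (∑ i, r i * b i j) • z j := by
    simp only [smul_sub, Finset.sum_sub_distrib, Finset.smul_sum, Finset.sum_smul, smul_smul]
    rw [Finset.sum_comm (s := (Finset.univ : Finset (Fin k)))]
    abel
  rw [hdec]
  refine Submodule.add_mem_sup
    (Submodule.sum_mem _ fun i _ ↦ Submodule.smul_mem_smul (hr i) ?_)
    (Submodule.sum_mem _ fun j _ ↦ Submodule.smul_mem_smul ?_ trivial)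
  · rw [LinearMap.mem_ker, map_sub, sub_eq_zero, map_sum]
    refine (hy i).trans ?_
    refine Finset.sum_congr rfl fun j _ ↦ ?_
    rw [map_smul, hz, ← hb]
    exact algebraMap_smul (R ⧸ J) (b i j) (y j)
  · rw [← Ideal.Quotient.eq_zero_iff_mem, map_sum, ← ha j]
    simp [hb]

theorem Module.Flat.of_ker_inf_smul_top_le [Module.Flat R P] (hg : Function.Surjective g)
    (h : ∀ I : Ideal R,
      LinearMap.ker g ⊓ I • ⊤ ≤ I • LinearMap.ker g ⊔ J • (⊤ : Submodule R P)) :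
    Module.Flat (R ⧸ J) M := by
  refine Module.Flat.of_forall_isTrivialRelation fun {l f x} hfx ↦ ?_
  choose r hr using fun i ↦ Ideal.Quotient.mk_surjective (f i)
  choose p hp using fun i ↦ hg (x i)
  have hsmul (c : R) (m : M) : Ideal.Quotient.mk J c • m = c • m := algebraMap_smul (R ⧸ J) c m
  have hker : ∑ i, r i • p i ∈ LinearMap.ker g := by
    simpa [hp, ← hsmul, hr] using hfx
  have hmem : ∑ i, r i • p i ∈ Ideal.span (Set.range r) • (⊤ : Submodule R P) :=
    Submodule.sum_mem _ fun i _ ↦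
      Submodule.smul_mem_smul (Ideal.subset_span (Set.mem_range_self i)) trivial
  obtain ⟨s, hs, t, ht, hst⟩ := Submodule.mem_sup.1 (h _ ⟨hker, hmem⟩)
  obtain ⟨y, hy, rfl⟩ := Submodule.exists_sum_of_mem_span_range_smul hs
  obtain ⟨n, c, w, hc, -, rfl⟩ := Submodule.exists_sum_of_mem_ideal_smul ht
  obtain ⟨k, a, z, hz, ha⟩ := Module.Flat.isTrivialRelation_of_sum_smul_eq_zero
    (R := R) (M := P) (f := Sum.elim r fun i ↦ -c i) (x := Sum.elim (p - y) w) (by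
      simp [smul_sub, ← hst])
  refine ⟨k, fun i j ↦ Ideal.Quotient.mk J (a (Sum.inl i) j), fun j ↦ g (z j),
    fun i ↦ ?_, fun j ↦ ?_⟩
  · have := congr_arg g (hz (Sum.inl i))
    simpa [hp, LinearMap.mem_ker.1 (hy i), hsmul] using this
  · have := ha j
    simp only [Fintype.sum_sum_type, Sum.elim_inl, Sum.elim_inr, neg_mul,
      Finset.sum_neg_distrib, add_neg_eq_zero] at this
    simp only [← hr, ← map_mul, ← map_sum, this]
    exact Ideal.Quotient.eq_zero_iff_mem.2 (J.sum_mem fun i _ ↦ J.mul_mem_right _ (hc i))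

/-- Dévissage: for `P` flat over a Noetherian local ring, the condition `N ∩ IP ⊆ IN + JP`
passes from the maximal ideal to every ideal containing `J` and a power of it. -/
theorem IsLocalRing.inf_smul_top_le_of_pow_le [IsNoetherianRing R] [IsLocalRing R]
    [Module.Flat R P] (J : Ideal R) (N : Submodule R P)
    (h : N ⊓ maximalIdeal R • ⊤ ≤ maximalIdeal R • N ⊔ J • ⊤) (c : ℕ) (I : Ideal R)
    (hJI : J ≤ I) (hI : maximalIdeal R ^ c ≤ I) : N ⊓ I • ⊤ ≤ I • N ⊔ J • ⊤ := by
  induction I using WellFoundedGT.induction with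
  | ind I ih =>
  by_cases htop : I = ⊤
  · subst htop
    exact inf_le_left.trans (by simp)
  classical
  have hex : ∃ c, maximalIdeal R ^ c ≤ I := ⟨c, hI⟩
  obtain ⟨d, hd⟩ : ∃ d, Nat.find hex = d + 1 := by
    refine Nat.exists_eq_succ_of_ne_zero fun h0 ↦ htop ?_
    have := Nat.find_spec hex
    rw [h0, pow_zero, Ideal.one_eq_top] at this
    exact top_le_iff.1 this
  obtain ⟨x, hxd, hxI⟩ := SetLike.not_le_iff_exists.1
    (Nat.find_min hex (m := d) (by omega))
  have hmx (a : R) (ha : a ∈ maximalIdeal R) : a * x ∈ I := by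
    have := Nat.find_spec hex
    rw [hd, pow_succ'] at this
    exact this (Ideal.mul_mem_mul ha hxd)
  have hlt : I < I ⊔ Ideal.span {x} :=
    lt_of_le_of_ne le_sup_left fun heq ↦ hxI (heq ▸ Ideal.mem_sup_right
      (Ideal.mem_span_singleton_self x))
  rintro v ⟨hvN, hvI⟩
  have hv := ih _ hlt (hJI.trans hlt.le) (hI.trans hlt.le)
    ⟨hvN, Submodule.smul_mono_left hlt.le hvI⟩
  rw [Submodule.sup_smul, sup_right_comm] at hv
  obtain ⟨s, hs, t, ht, rfl⟩ := Submodule.mem_sup.1 hv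
  refine Submodule.add_mem _ hs ?_
  rw [Submodule.ideal_span_singleton_smul] at ht
  obtain ⟨n, hn, rfl⟩ := (Submodule.mem_smul_pointwise_iff_exists _ _ _).1 ht
  have hsI : s ∈ I • (⊤ : Submodule R P) := by
    have hle : I • N ⊔ J • ⊤ ≤ I • (⊤ : Submodule R P) :=
      sup_le (Submodule.smul_mono le_rfl le_top) (Submodule.smul_mono_left hJI)
    exact hle hs
  have hnm : n ∈ maximalIdeal R • (⊤ : Submodule R P) :=
    Module.Flat.mem_smul_top_of_smul_mem_smul_top
      (fun a ha ↦ (mem_maximalIdeal a).2 fun hu ↦ hxI ((Ideal.mul_unit_mem_iff_mem I hu).1 ha))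
      ((Submodule.add_mem_iff_right _ hsI).1 hvI)
  obtain ⟨m, hm, j, hj, rfl⟩ := Submodule.mem_sup.1 (h ⟨hn, hnm⟩)
  rw [smul_add]
  refine Submodule.add_mem_sup ?_ (Submodule.smul_mem _ x hj)
  refine Submodule.smul_induction_on hm (fun a ha y hy ↦ ?_) fun y z hy hz ↦ ?_
  · rw [smul_smul, mul_comm]
    exact Submodule.smul_mem_smul (hmx a ha) hy
  · rw [smul_add]
    exact Submodule.add_mem _ hy hz

end FlatnessCriterion

/-- Krull's intersection theorem: submodules of finite modules over a Noetherian local ring are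
closed in the adic topology of a proper ideal. -/
theorem IsLocalRing.mem_of_forall_mem_sup_pow_smul_top {A P : Type*} [CommRing A]
    [IsNoetherianRing A] [IsLocalRing A] [AddCommGroup P] [Module A P] [Module.Finite A P]
    {I : Ideal A} (hI : I ≠ ⊤) (K : Submodule A P) {y : P}
    (hy : ∀ c : ℕ, y ∈ K ⊔ I ^ c • ⊤) : y ∈ K := by
  rw [← Submodule.Quotient.mk_eq_zero, ← Submodule.mem_bot A,
    ← Ideal.iInf_pow_smul_eq_bot_of_isLocalRing (M := P ⧸ K) I hI, Submodule.mem_iInf]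
  intro c
  have := Submodule.mem_map_of_mem (f := K.mkQ) (hy c)
  simpa [Submodule.map_sup, Submodule.map_smul''] using this

/-- Local criterion of flatness over `R ⧸ J`, for the quotient of an `R`-flat module `P` that is
finite over a Noetherian local `R`-algebra. -/
theorem IsLocalRing.flat_quotient_iff_ker_inf_smul_top_le {R A P M : Type*} [CommRing R]
    [IsNoetherianRing R] [IsLocalRing R] {J : Ideal R}
    [CommRing A] [IsNoetherianRing A] [IsLocalRing A] [Algebra R A]
    (hloc : Ideal.map (algebraMap R A) (maximalIdeal R) ≤ maximalIdeal A)
    [AddCommGroup P] [Module R P] [Module A P] [IsScalarTower R A P] [Module.Finite A P]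
    [Module.Flat R P] [AddCommGroup M] [Module R M] [Module (R ⧸ J) M]
    [IsScalarTower R (R ⧸ J) M] {g : P →ₗ[R] M} (hg : Function.Surjective g)
    (N : Submodule A P) (hN : LinearMap.ker g = N.restrictScalars R) :
    Module.Flat (R ⧸ J) M ↔
      N.restrictScalars R ⊓ maximalIdeal R • ⊤ ≤
        maximalIdeal R • N.restrictScalars R ⊔ J • ⊤ := by
  refine ⟨fun _ ↦ hN ▸ Module.Flat.ker_inf_smul_top_le hg _, fun h ↦
    Module.Flat.of_ker_inf_smul_top_le hg fun I ↦ ?_⟩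
  rw [hN]
  rintro y ⟨hyN, hyI⟩
  have hK : I • N.restrictScalars R ⊔ J • ⊤ =
      (I.map (algebraMap R A) • N ⊔ J.map (algebraMap R A) • ⊤).restrictScalars R := by
    rw [Submodule.restrictScalars_sup, Ideal.smul_restrictScalars, Ideal.smul_restrictScalars,
      Submodule.restrictScalars_top]
  rw [hK, Submodule.restrictScalars_mem]
  refine mem_of_forall_mem_sup_pow_smul_top
    (ne_top_of_le_ne_top (Ideal.IsPrime.ne_top inferInstance) hloc) _ fun c ↦ ?_
  have hy := inf_smul_top_le_of_pow_le J _ h c (I ⊔ J ⊔ maximalIdeal R ^ c)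
    (le_sup_right.trans le_sup_left) le_sup_right
    ⟨hyN, Submodule.smul_mono_left (le_sup_left.trans le_sup_left) hyI⟩
  rw [← Submodule.restrictScalars_mem R, Submodule.restrictScalars_sup, ← hK, ← Ideal.map_pow,
    Ideal.smul_restrictScalars, Submodule.restrictScalars_top]
  revert hy
  apply SetLike.le_def.1
  rw [Submodule.sup_smul, Submodule.sup_smul]
  refine sup_le (sup_le (sup_le ?_ ?_) ?_) ?_
  · exact le_sup_left.trans le_sup_left
  · exact (Submodule.smul_mono le_rfl le_top).trans (le_sup_right.trans le_sup_left)
  · exact (Submodule.smul_mono le_rfl le_top).trans le_sup_right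
  · exact le_sup_right.trans le_sup_left

theorem Ideal.mem_smul_top_pi_iff {A ι : Type*} [CommRing A] [Finite ι] (I : Ideal A)
    (v : ι → A) : v ∈ I • (⊤ : Submodule A (ι → A)) ↔ ∀ i, v i ∈ I := by
  classical
  have := Fintype.ofFinite ι
  refine ⟨fun hv i ↦ ?_, fun hv ↦ ?_⟩
  · have := Submodule.mem_map_of_mem (f := LinearMap.proj (R := A) (φ := fun _ : ι ↦ A) i) hv
    rw [Submodule.map_smul''] at this
    exact Ideal.mul_le_right (I := Submodule.map _ ⊤) (by rwa [mul_comm])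
  · rw [pi_eq_sum_univ v]
    exact Submodule.sum_mem _ fun i _ ↦ Submodule.smul_mem_smul (hv i) trivial

/-- Lemma 3.2: with `R` Noetherian local, `J ⊆ 𝔪`, `A` a Noetherian local flat
`R`-algebra with `𝔪A` contained in the maximal ideal of `A`, and `F = coker Φ` for a
matrix `Φ` over `A`: `F ⊗_R R/J` is flat over `R/J` iff the image of
`ker_J Φ = Φ⁻¹(J·A^q)` in `(A/𝔪A)^p` equals the kernel of the reduced map `Φ_𝔪`. -/
theorem stmt3 {R : Type*} [CommRing R] [IsNoetherianRing R] [IsLocalRing R]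
    (J : Ideal R) (hJ : J ≤ maximalIdeal R)
    {A : Type*} [CommRing A] [IsNoetherianRing A] [IsLocalRing A] [Algebra R A]
    [Module.Flat R A]
    (hloc : Ideal.map (algebraMap R A) (maximalIdeal R) ≤ maximalIdeal A)
    {p q : ℕ} (Φ : Matrix (Fin q) (Fin p) A) :
    Module.Flat (R ⧸ J)
        ((R ⧸ J) ⊗[R] ((Fin q → A) ⧸ LinearMap.range Φ.mulVecLin)) ↔
      {ζbar : Fin p → A ⧸ Ideal.map (algebraMap R A) (maximalIdeal R) |
          ∃ ζ : Fin p → A, (∀ i, Φ.mulVec ζ i ∈ Ideal.map (algebraMap R A) J) ∧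
            (fun i => Ideal.Quotient.mk (Ideal.map (algebraMap R A) (maximalIdeal R)) (ζ i))
              = ζbar} =
      {ζbar | (Φ.map (Ideal.Quotient.mk (Ideal.map (algebraMap R A) (maximalIdeal R)))).mulVec
          ζbar = 0} := by
  set N₀ : Submodule A (Fin q → A) := LinearMap.range Φ.mulVecLin
  set 𝔪A : Ideal A := Ideal.map (algebraMap R A) (maximalIdeal R) with h𝔪A
  set JA : Ideal A := Ideal.map (algebraMap R A) J with hJA
  have hJm : JA ≤ 𝔪A := Ideal.map_mono hJ
  let g : (Fin q → A) →ₗ[R] (R ⧸ J) ⊗[R] ((Fin q → A) ⧸ N₀) :=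
    TensorProduct.mk R (R ⧸ J) ((Fin q → A) ⧸ N₀) 1 ∘ₗ N₀.mkQ.restrictScalars R
  have hg : Function.Surjective g :=
    (TensorProduct.mk_surjective R _ _ Ideal.Quotient.mk_surjective).comp N₀.mkQ_surjective
  have hker : LinearMap.ker g = (N₀ ⊔ JA • ⊤).restrictScalars R := by
    rw [LinearMap.ker_comp, LinearMap.ker_tensorProductMk]
    have htop : J • (⊤ : Submodule R ((Fin q → A) ⧸ N₀)) =
        (J • (⊤ : Submodule R (Fin q → A))).map (N₀.mkQ.restrictScalars R) := by
      rw [Submodule.map_smul'', Submodule.map_top,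
        (LinearMap.range_eq_top (f := N₀.mkQ.restrictScalars R)).2 N₀.mkQ_surjective]
    rw [htop, Submodule.comap_map_eq, Submodule.restrictScalars_sup, Ideal.smul_restrictScalars,
      Submodule.restrictScalars_top, sup_comm, LinearMap.ker_restrictScalars, Submodule.ker_mkQ]
  have : Module.Flat R (Fin q → A) :=
    .of_linearEquiv (DirectSum.linearEquivFunOnFintype R (Fin q) fun _ ↦ A).symm
  rw [flat_quotient_iff_ker_inf_smul_top_le hloc hg _ hker]
  have hcrit : (N₀ ⊔ JA • ⊤).restrictScalars R ⊓ maximalIdeal R • ⊤ ≤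
        maximalIdeal R • (N₀ ⊔ JA • ⊤).restrictScalars R ⊔ J • ⊤ ↔
      N₀ ⊓ 𝔪A • ⊤ ≤ 𝔪A • N₀ ⊔ JA • ⊤ := by
    rw [← Submodule.restrictScalars_top R A, ← Ideal.smul_restrictScalars,
      ← Ideal.smul_restrictScalars, ← Ideal.smul_restrictScalars, ← h𝔪A, ← hJA,
      ← Submodule.restrictScalars_inf, ← Submodule.restrictScalars_sup,
      Submodule.restrictScalars_le, sup_comm N₀,
      sup_inf_assoc_of_le _ (Submodule.smul_mono_left hJm), Submodule.smul_sup, sup_le_iff,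
      sup_assoc, sup_comm (𝔪A • N₀)]
    rw [← sup_assoc, sup_eq_right.2
      (Submodule.smul_le_right : 𝔪A • JA • (⊤ : Submodule A (Fin q → A)) ≤ _)]
    exact and_iff_right le_sup_left
  have hred (ζ : Fin p → A) : (Φ.map (Ideal.Quotient.mk 𝔪A)).mulVec
      (fun i ↦ Ideal.Quotient.mk 𝔪A (ζ i)) = 0 ↔ ∀ i, Φ.mulVec ζ i ∈ 𝔪A := by
    have key : ∀ i, _ := fun i ↦ RingHom.map_mulVec (Ideal.Quotient.mk 𝔪A) Φ ζ i
    simp only [funext_iff, ← Ideal.Quotient.eq_zero_iff_mem, key]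
    rfl
  have hsmul : 𝔪A • N₀ = (𝔪A • (⊤ : Submodule A (Fin p → A))).map Φ.mulVecLin := by
    rw [Submodule.map_smul'', Submodule.map_top]
  rw [hcrit, hsmul]
  refine ⟨fun h ↦ Set.Subset.antisymm ?_ fun ζbar hζbar ↦ ?_, fun h ↦ ?_⟩
  · rintro _ ⟨ζ, hζ, rfl⟩
    exact (hred ζ).2 fun i ↦ hJm (hζ i)
  · choose ζ hζ using fun i ↦ Ideal.Quotient.mk_surjective (ζbar i)
    obtain rfl := funext hζ
    have hmem := (Ideal.mem_smul_top_pi_iff _ _).2 ((hred ζ).1 hζbar)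
    obtain ⟨_, ⟨ξ, hξ, rfl⟩, w, hw, hsum⟩ := Submodule.mem_sup.1 (h ⟨⟨ζ, rfl⟩, hmem⟩)
    refine ⟨ζ - ξ, (Ideal.mem_smul_top_pi_iff _ _).1 ?_, funext fun i ↦ ?_⟩
    · rw [Matrix.mulVec_sub]
      exact eq_sub_of_add_eq' hsum ▸ hw
    · simpa using Ideal.Quotient.eq_zero_iff_mem.2 ((Ideal.mem_smul_top_pi_iff _ _).1 hξ i)
  · rintro _ ⟨⟨ζ, rfl⟩, hζ⟩
    obtain ⟨ξ, hξ, hξζ⟩ := h.ge ((hred ζ).2 ((Ideal.mem_smul_top_pi_iff _ _).1 hζ))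
    have hdiff : ζ - ξ ∈ 𝔪A • (⊤ : Submodule A (Fin p → A)) :=
      (Ideal.mem_smul_top_pi_iff _ _).2 fun i ↦
        Ideal.Quotient.eq.1 (congr_fun hξζ i).symm
    rw [← sub_add_cancel ζ ξ, map_add]
    exact Submodule.add_mem_sup (Submodule.mem_map_of_mem hdiff)
      ((Ideal.mem_smul_top_pi_iff _ _).2 hξ)
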